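/- Let X be a metric space, μ an Ahlfors s-regular Borel measure on X for some s ∈ (0,∞), (Y,ρ) a metric space, 0 ≤ r ≤ 1 and 0 < q < ∞ with rq ≤ s, and u ∈ B^r_{q,∞}(X,μ;Y). Then for any sequence ε_n > 0 with ε_n → 0 there exists a set D ⊂ X that is σ-finite with respect to the Hausdorff measure H^{s−rq} such that for every x ∈ X \ D one has liminf_{n→∞} ⨍_{B_{ε_n}(x)} ⨍_{B_{ε_n}(x)} ρ(u(z),u(y))^q dμ(y) dμ(z) = 0; in particular every point of X \ D is a general average Lebesgue point of u. -/

import Mathlib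

open MeasureTheory Metric Filter Set
open scoped ENNReal Topology

/-- A Borel measure `μ` on a metric space is Ahlfors `s`-regular:
there are constants `c, C > 0` with `c r^s ≤ μ (closedBall x r) ≤ C r^s`
for all `x` and `0 < r < diam X`. -/
def IsAhlfors {X : Type*} [MetricSpace X] [MeasurableSpace X]
    (μ : Measure X) (s : ℝ) : Prop :=
  ∃ c C : ℝ, 0 < c ∧ 0 < C ∧ ∀ (x : X) (ρ : ℝ), 0 < ρ →
    ENNReal.ofReal ρ < EMetric.diam (Set.univ : Set X) →
    ENNReal.ofReal (c * ρ ^ s) ≤ μ (closedBall x ρ) ∧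
      μ (closedBall x ρ) ≤ ENNReal.ofReal (C * ρ ^ s)

/-- `u ∈ B^r_{q,∞}(X,μ;Y)`: `u` is measurable, `F_u(x,z) = ρ(u x, u z)` is locally
`q`-integrable on `X × X`, and the Besov seminorm (to the power `q`) is finite. -/
def MemBesov {X Y : Type*} [MetricSpace X] [MeasurableSpace X] [MetricSpace Y]
    [MeasurableSpace Y] [BorelSpace Y]
    (μ : Measure X) (r q : ℝ) (u : X → Y) : Prop :=
  Measurable u ∧
  (∀ (x : X) (R : ℝ), 0 < R →
    ∫⁻ z in closedBall x R, ∫⁻ y in closedBall x R, edist (u z) (u y) ^ q ∂μ ∂μ < ⊤) ∧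
  (⨆ (t : ℝ) (_ : 0 < t),
    ∫⁻ x, (ENNReal.ofReal t ^ (r * q))⁻¹ *
      ((μ (closedBall x t))⁻¹ * ∫⁻ z in closedBall x t, edist (u x) (u z) ^ q ∂μ) ∂μ) < ⊤

/-- The double average `⨍_{B_ε(x)} ⨍_{B_ε(x)} W(z,y) dμ(z) dμ(y)`. -/
noncomputable def doubleAvg {X : Type*} [MetricSpace X] [MeasurableSpace X]
    (μ : Measure X) (W : X → X → ℝ≥0∞) (x : X) (ε : ℝ) : ℝ≥0∞ :=
  (μ (closedBall x ε))⁻¹ * (μ (closedBall x ε))⁻¹ *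
    ∫⁻ z in closedBall x ε, ∫⁻ y in closedBall x ε, W z y ∂μ ∂μ

/-- A set whose finite `t`-separated subsets have bounded cardinality has a finite `t`-net. -/
theorem exists_net_aux {X : Type*} [MetricSpace X] (A : Set X) (t : ℝ) (ht : 0 ≤ t) (M : ℝ≥0∞)
    (hM : M ≠ ⊤)
    (h : ∀ T : Finset X, (T : Set X) ⊆ A → (T : Set X).Pairwise (fun x y => t < dist x y) →
      (T.card : ℝ≥0∞) ≤ M) :
    ∃ T : Finset X, (T.card : ℝ≥0∞) ≤ M ∧ A ⊆ ⋃ x : T, closedBall (x : X) t := by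
  classical
  by_contra! hcon
  have key : ∀ n : ℕ, ∃ T : Finset X, (T : Set X) ⊆ A ∧
      (T : Set X).Pairwise (fun x y => t < dist x y) ∧ T.card = n := by
    intro n
    induction n with
    | zero => exact ⟨∅, by simp, by simp, rfl⟩
    | succ n ih =>
      obtain ⟨T, hTA, hTs, hTn⟩ := ih
      obtain ⟨x, hxA, hx⟩ := Set.not_subset.1 (hcon T (h T hTA hTs))
      have hx' : ∀ y ∈ T, t < dist x y := by
        intro y hy
        by_contra! hle
        exact hx (mem_iUnion.2 ⟨⟨y, hy⟩, by simpa using hle⟩)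
      have hxT : x ∉ T := fun hxT => by
        have := hx' x hxT
        rw [dist_self] at this
        linarith
      refine ⟨insert x T, ?_, ?_, ?_⟩
      · rw [Finset.coe_insert]
        exact Set.insert_subset hxA hTA
      · rw [Finset.coe_insert]
        refine hTs.insert ?_
        intro y hy _
        exact ⟨hx' y hy, by rw [dist_comm]; exact hx' y hy⟩
      · rw [Finset.card_insert_of_notMem hxT, hTn]
  obtain ⟨n, hn⟩ := ENNReal.exists_nat_gt hM
  obtain ⟨T, hTA, hTs, hTn⟩ := key n
  have := h T hTA hTs
  rw [hTn] at this
  exact absurd this (not_le.2 hn)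

/-- Estimate of the double average on one ball. -/
theorem doubleAvg_le_aux {X : Type*} [MetricSpace X] [MeasurableSpace X] [BorelSpace X]
    (μ : Measure X) (W : X → X → ℝ≥0∞) (x : X) (e : ℝ) (a b : ℝ≥0∞)
    (hb : b ≠ ⊤)
    (hlow : a ≤ μ (closedBall x e))
    (hpos : ∀ z, μ (closedBall z (2 * e)) ≠ 0)
    (hup : ∀ z, μ (closedBall z (2 * e)) ≤ b) :
    doubleAvg μ W x e ≤ a⁻¹ * a⁻¹ * b *
      ∫⁻ z in closedBall x e, (μ (closedBall z (2 * e)))⁻¹ *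
        ∫⁻ y in closedBall z (2 * e), W z y ∂μ ∂μ := by
  unfold doubleAvg
  rw [mul_assoc _ b, ← lintegral_const_mul' _ _ hb]
  have hinv := ENNReal.inv_le_inv.2 hlow
  refine mul_le_mul' (mul_le_mul' hinv hinv) ?_
  refine setLIntegral_mono' measurableSet_closedBall ?_
  intro z hz
  have hsub : closedBall x e ⊆ closedBall z (2 * e) := by
    refine closedBall_subset_closedBall' ?_
    have : dist x z ≤ e := by rw [dist_comm]; exact hz
    linarith
  calc ∫⁻ y in closedBall x e, W z y ∂μ ≤ ∫⁻ y in closedBall z (2 * e), W z y ∂μ :=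
        lintegral_mono_set hsub
    _ = μ (closedBall z (2 * e)) * ((μ (closedBall z (2 * e)))⁻¹ *
          ∫⁻ y in closedBall z (2 * e), W z y ∂μ) := by
        rw [← mul_assoc, ENNReal.mul_inv_cancel (hpos z) (ne_top_of_le_ne_top hb (hup z)),
          one_mul]
    _ ≤ _ := mul_le_mul' (hup z) le_rfl

/-- Bound on the number of separated points with large double average. -/
theorem card_le_aux {X : Type*} [MetricSpace X] [MeasurableSpace X] [BorelSpace X]
    (μ : Measure X) (W : X → X → ℝ≥0∞) (e : ℝ) (a b δ K p : ℝ≥0∞)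
    (hb : b ≠ ⊤) (hδ : δ ≠ 0) (hδ' : δ ≠ ⊤) (hp : p ≠ 0) (hp' : p ≠ ⊤)
    (hlow : ∀ x, a ≤ μ (closedBall x e))
    (hpos : ∀ z, μ (closedBall z (2 * e)) ≠ 0)
    (hup : ∀ z, μ (closedBall z (2 * e)) ≤ b)
    (hK : ∫⁻ z, p⁻¹ * ((μ (closedBall z (2 * e)))⁻¹ *
        ∫⁻ y in closedBall z (2 * e), W z y ∂μ) ∂μ ≤ K)
    (T : Finset X) (hT : (T : Set X).Pairwise (fun x y => 2 * e < dist x y))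
    (hTδ : ∀ x ∈ T, δ ≤ doubleAvg μ W x e) :
    (T.card : ℝ≥0∞) ≤ δ⁻¹ * (a⁻¹ * a⁻¹ * b * (p * K)) := by
  have hdisj : (T : Set X).PairwiseDisjoint (fun x => closedBall x e) := by
    intro x hx y hy hxy
    refine closedBall_disjoint_closedBall ?_
    have := hT hx hy hxy
    linarith
  have hK' : ∫⁻ z, ((μ (closedBall z (2 * e)))⁻¹ *
        ∫⁻ y in closedBall z (2 * e), W z y ∂μ) ∂μ ≤ p * K := by
    rw [lintegral_const_mul' _ _ (ENNReal.inv_ne_top.2 hp)] at hK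
    refine le_trans (le_of_eq ?_) (mul_le_mul' le_rfl hK)
    rw [← mul_assoc, ENNReal.mul_inv_cancel hp hp', one_mul]
  have h1 : (T.card : ℝ≥0∞) * δ ≤ a⁻¹ * a⁻¹ * b * (p * K) := by
    calc (T.card : ℝ≥0∞) * δ = ∑ x ∈ T, δ := by simp
      _ ≤ ∑ x ∈ T, a⁻¹ * a⁻¹ * b *
          ∫⁻ z in closedBall x e, (μ (closedBall z (2 * e)))⁻¹ *
            ∫⁻ y in closedBall z (2 * e), W z y ∂μ ∂μ :=
          Finset.sum_le_sum fun x hx =>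
            (hTδ x hx).trans (doubleAvg_le_aux μ W x e a b hb (hlow x) hpos hup)
      _ = a⁻¹ * a⁻¹ * b * ∫⁻ z in ⋃ x ∈ T, closedBall x e, (μ (closedBall z (2 * e)))⁻¹ *
            ∫⁻ y in closedBall z (2 * e), W z y ∂μ ∂μ := by
          rw [← Finset.mul_sum,
            lintegral_biUnion_finset hdisj (fun x _ => measurableSet_closedBall)]
      _ ≤ _ := mul_le_mul' le_rfl ((setLIntegral_le_lintegral _ _).trans hK')
  calc (T.card : ℝ≥0∞) = δ⁻¹ * (T.card * δ) := by
        rw [mul_comm, mul_assoc, ENNReal.mul_inv_cancel hδ hδ', mul_one]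
    _ ≤ _ := mul_le_mul' le_rfl h1

/-- The scaling identity for the constants. -/
theorem const_aux (c C e s p d : ℝ) (hc : 0 < c) (hC : 0 < C) (he : 0 < e) (hd : d = s - p) :
    (c * e ^ s)⁻¹ * (c * e ^ s)⁻¹ * (C * (2 * e) ^ s) * (2 * e) ^ p * (4 * e) ^ d =
      c⁻¹ * c⁻¹ * C * 2 ^ s * 2 ^ p * 4 ^ d := by
  subst hd
  rw [Real.mul_rpow (by norm_num) he.le, Real.mul_rpow (by norm_num) he.le,
    Real.mul_rpow (by norm_num) he.le, Real.rpow_sub he]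
  have h1 := (Real.rpow_pos_of_pos he s).ne'
  have h2 := (Real.rpow_pos_of_pos he p).ne'
  field_simp

/-- Multiplicativity of `ENNReal.ofReal` on the relevant products. -/
theorem ofReal_mul_aux (a b p d : ℝ) (ha : 0 < a) (hb : 0 ≤ b) (hp : 0 ≤ p) :
    ENNReal.ofReal (a⁻¹ * a⁻¹ * b * p * d) = (ENNReal.ofReal a)⁻¹ * (ENNReal.ofReal a)⁻¹ *
      ENNReal.ofReal b * ENNReal.ofReal p * ENNReal.ofReal d := by
  rw [ENNReal.ofReal_mul (by positivity), ENNReal.ofReal_mul (by positivity),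
    ENNReal.ofReal_mul (by positivity), ENNReal.ofReal_mul (by positivity),
    ENNReal.ofReal_inv_of_pos ha]

/-- The exceptional pieces have finite Hausdorff measure. -/
theorem hausdorff_aux {X : Type*} [MetricSpace X] [MeasurableSpace X] [BorelSpace X]
    [Nontrivial X] (μ : Measure X) (s p : ℝ) (hμ : IsAhlfors μ s) (hps : p ≤ s)
    (W : X → X → ℝ≥0∞) (K : ℝ≥0∞) (hKtop : K ≠ ⊤)
    (hK : ∀ t : ℝ, 0 < t → ∫⁻ x, (ENNReal.ofReal t ^ p)⁻¹ *
      ((μ (closedBall x t))⁻¹ * ∫⁻ z in closedBall x t, W x z ∂μ) ∂μ ≤ K)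
    (ε : ℕ → ℝ) (hε : ∀ n, 0 < ε n) (hεlim : Tendsto ε atTop (𝓝 0))
    (δ : ℝ≥0∞) (hδ : δ ≠ 0) (hδ' : δ ≠ ⊤) (m : ℕ) :
    μH[s - p] {x | ∀ n ≥ m, δ ≤ doubleAvg μ W x (ε n)} < ⊤ := by
  obtain ⟨c, C, hc, hC, hreg⟩ := hμ
  set A : Set X := {x | ∀ n ≥ m, δ ≤ doubleAvg μ W x (ε n)} with hA
  set Q : ℝ≥0∞ := δ⁻¹ *
    (ENNReal.ofReal (c⁻¹ * c⁻¹ * C * 2 ^ s * 2 ^ p * 4 ^ (s - p)) * K) with hQ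
  have hQtop : Q < ⊤ := ENNReal.mul_lt_top (ENNReal.inv_lt_top.2 (pos_iff_ne_zero.2 hδ))
    (ENNReal.mul_lt_top ENNReal.ofReal_lt_top hKtop.lt_top)
  have hdiam : 0 < EMetric.diam (Set.univ : Set X) := by
    obtain ⟨x, y, hxy⟩ := exists_pair_ne X
    exact (edist_pos.2 hxy).trans_le (EMetric.edist_le_diam_of_mem (mem_univ x) (mem_univ y))
  have htend : ∀ k : ℝ, Tendsto (fun n => ENNReal.ofReal (k * ε n)) atTop (𝓝 0) := by
    intro k
    have := ENNReal.tendsto_ofReal (hεlim.const_mul k)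
    simpa using this
  have hev : ∀ᶠ n in atTop, m ≤ n ∧ ENNReal.ofReal (2 * ε n) < EMetric.diam (Set.univ : Set X) :=
    (eventually_ge_atTop m).and ((htend 2).eventually (gt_mem_nhds hdiam))
  have hnet : ∀ n, ∃ T : Finset X,
      (m ≤ n ∧ ENNReal.ofReal (2 * ε n) < EMetric.diam (Set.univ : Set X)) →
      (T.card : ℝ≥0∞) * ENNReal.ofReal (4 * ε n) ^ (s - p) ≤ Q ∧
        A ⊆ ⋃ x : T, closedBall (x : X) (2 * ε n) := by
    intro n
    by_cases hn : m ≤ n ∧ ENNReal.ofReal (2 * ε n) < EMetric.diam (Set.univ : Set X)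
    swap
    · exact ⟨∅, fun h => absurd h hn⟩
    have he := hε n
    have h2e : 0 < 2 * ε n := by linarith
    have h4e : 0 < 4 * ε n := by linarith
    have h1 : ENNReal.ofReal (ε n) < EMetric.diam (Set.univ : Set X) :=
      lt_of_le_of_lt (ENNReal.ofReal_le_ofReal (by linarith)) hn.2
    have hcpos : 0 < c * ε n ^ s := mul_pos hc (Real.rpow_pos_of_pos he s)
    have hp2 : 0 < (2 * ε n) ^ p := Real.rpow_pos_of_pos h2e p
    have hpeq : ENNReal.ofReal (2 * ε n) ^ p = ENNReal.ofReal ((2 * ε n) ^ p) :=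
      ENNReal.ofReal_rpow_of_pos h2e
    have hdeq : ENNReal.ofReal (4 * ε n) ^ (s - p) = ENNReal.ofReal ((4 * ε n) ^ (s - p)) :=
      ENNReal.ofReal_rpow_of_pos h4e
    set M : ℝ≥0∞ := δ⁻¹ * ((ENNReal.ofReal (c * ε n ^ s))⁻¹ * (ENNReal.ofReal (c * ε n ^ s))⁻¹ *
      ENNReal.ofReal (C * (2 * ε n) ^ s) * (ENNReal.ofReal ((2 * ε n) ^ p) * K)) with hM
    have hMQ : M * ENNReal.ofReal ((4 * ε n) ^ (s - p)) = Q := by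
      rw [hM, hQ, ← const_aux c C (ε n) s p (s - p) hc hC he rfl,
        ofReal_mul_aux _ _ _ _ hcpos (by positivity) (by positivity)]
      ring
    have hainv : (ENNReal.ofReal (c * ε n ^ s))⁻¹ ≠ ⊤ :=
      ENNReal.inv_ne_top.2 (ENNReal.ofReal_pos.2 hcpos).ne'
    have hMtop : M ≠ ⊤ :=
      ENNReal.mul_ne_top (ENNReal.inv_ne_top.2 hδ) (ENNReal.mul_ne_top
        (ENNReal.mul_ne_top (ENNReal.mul_ne_top hainv hainv) ENNReal.ofReal_ne_top)
        (ENNReal.mul_ne_top ENNReal.ofReal_ne_top hKtop))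
    obtain ⟨T, hTc, hTA⟩ := exists_net_aux A (2 * ε n) h2e.le M hMtop (by
      intro T hTA hTs
      refine card_le_aux μ W (ε n) _ _ δ K _ ENNReal.ofReal_ne_top hδ hδ'
        (ENNReal.ofReal_pos.2 hp2).ne' ENNReal.ofReal_ne_top
        (fun x => (hreg x _ he h1).1) (fun z => ?_) (fun z => (hreg z _ h2e hn.2).2)
        ?_ T hTs (fun x hx => hTA hx n hn.1)
      · refine (lt_of_lt_of_le ?_ (hreg z _ h2e hn.2).1).ne'
        exact ENNReal.ofReal_pos.2 (mul_pos hc (Real.rpow_pos_of_pos h2e s))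
      · rw [← hpeq]
        exact hK _ h2e)
    refine ⟨T, fun _ => ⟨?_, hTA⟩⟩
    rw [hdeq, ← hMQ]
    exact mul_le_mul' hTc le_rfl
  choose T hT using hnet
  have hdiamball : ∀ n (x : X), EMetric.diam (closedBall x (2 * ε n)) ≤
      ENNReal.ofReal (4 * ε n) := by
    intro n x
    have he := hε n
    refine EMetric.diam_le fun y hy z hz => ?_
    rw [edist_dist]
    refine ENNReal.ofReal_le_ofReal ?_
    have h1 : dist y x ≤ 2 * ε n := hy
    have h2 : dist z x ≤ 2 * ε n := hz
    have h3 := dist_triangle_right y z x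
    linarith
  have hle := Measure.hausdorffMeasure_le_liminf_sum (ι := fun n => T n) (s - p) A
    (l := atTop) (fun n => ENNReal.ofReal (4 * ε n)) (htend 4)
    (fun n x => closedBall (x : X) (2 * ε n))
    (Eventually.of_forall fun n x => hdiamball n x)
    (hev.mono fun n hn => (hT n hn).2)
  refine lt_of_le_of_lt (hle.trans ?_) hQtop
  refine liminf_le_of_frequently_le' (Eventually.frequently ?_)
  filter_upwards [hev] with n hn
  refine le_trans ?_ (hT n hn).1
  calc _ ≤ ∑ x : T n, ENNReal.ofReal (4 * ε n) ^ (s - p) :=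
        Finset.sum_le_sum fun x _ =>
          ENNReal.rpow_le_rpow (hdiamball n x) (sub_nonneg.2 hps)
    _ = _ := by simp

/-- General average Lebesgue points of Besov functions: outside a set `D` which is
`σ`-finite with respect to `H^{s-rq}`, along any fixed sequence `ε_n → 0⁺` the
double averages of `ρ(u z, u y)^q` have liminf `0`. -/
theorem statement0 {X Y : Type*} [MetricSpace X] [MeasurableSpace X] [BorelSpace X]
    [MetricSpace Y] [MeasurableSpace Y] [BorelSpace Y] (μ : Measure X) (s r q : ℝ) (hs : 0 < s)
    (hμ : IsAhlfors μ s) (hr0 : 0 ≤ r) (hr1 : r ≤ 1) (hq : 0 < q) (hrq : r * q ≤ s)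
    (u : X → Y) (hu : MemBesov μ r q u)
    (ε : ℕ → ℝ) (hε : ∀ n, 0 < ε n) (hεlim : Tendsto ε atTop (𝓝 0)) :
    ∃ D : Set X, (∃ F : ℕ → Set X, D = ⋃ n, F n ∧ ∀ n, μH[s - r * q] (F n) < ⊤) ∧
      ∀ x ∉ D,
        liminf (fun n => doubleAvg μ (fun z y => edist (u z) (u y) ^ q) x (ε n)) atTop = 0 := by
  rcases subsingleton_or_nontrivial X with hX | hX
  · refine ⟨∅, ⟨fun _ => ∅, by simp, by simp⟩, fun x _ => ?_⟩
    have h0 : ∀ n, doubleAvg μ (fun z y => edist (u z) (u y) ^ q) x (ε n) = 0 := by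
      intro n
      have : ∀ z y : X, edist (u z) (u y) ^ q = 0 := by
        intro z y
        rw [Subsingleton.elim z y, edist_self, ENNReal.zero_rpow_of_pos hq]
      simp [doubleAvg, this]
    simp [h0]
  obtain ⟨-, -, hK⟩ := hu
  set K : ℝ≥0∞ := ⨆ (t : ℝ) (_ : 0 < t),
    ∫⁻ x, (ENNReal.ofReal t ^ (r * q))⁻¹ *
      ((μ (closedBall x t))⁻¹ * ∫⁻ z in closedBall x t, edist (u x) (u z) ^ q ∂μ) ∂μ with hKdef
  let G : ℕ → ℕ → Set X := fun k m => {x | ∀ n ≥ m, ((k : ℝ≥0∞) + 1)⁻¹ ≤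
    doubleAvg μ (fun z y => edist (u z) (u y) ^ q) x (ε n)}
  refine ⟨⋃ j : ℕ, G j.unpair.1 j.unpair.2, ⟨_, rfl, fun j => ?_⟩, fun x hx => ?_⟩
  · refine hausdorff_aux μ s (r * q) hμ hrq _ K hK.ne ?_ ε hε hεlim _ ?_ ?_ _
    · intro t ht
      exact le_iSup₂_of_le t ht le_rfl
    · exact ENNReal.inv_ne_zero.2 (by simp)
    · exact ENNReal.inv_ne_top.2 (by simp)
  · have hk : ∀ k : ℕ,
        liminf (fun n => doubleAvg μ (fun z y => edist (u z) (u y) ^ q) x (ε n)) atTop ≤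
          ((k : ℝ≥0∞) + 1)⁻¹ := by
      intro k
      refine liminf_le_of_frequently_le' (frequently_atTop.2 fun m => ?_)
      have hxm : x ∉ G k m := fun h => hx (mem_iUnion.2 ⟨Nat.pair k m, by simpa using h⟩)
      simp only [G, mem_setOf_eq, not_forall, not_le] at hxm
      obtain ⟨n, hn, hlt⟩ := hxm
      exact ⟨n, hn, hlt.le⟩
    by_contra hne
    obtain ⟨k, hk'⟩ := ENNReal.exists_inv_nat_lt hne
    refine absurd (hk'.trans_le (hk k)) (not_lt.2 ?_)
    exact ENNReal.inv_le_inv.2 le_self_add
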